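/- For all nonnegative integers a and b, one has S⊖(a, b | a, b) = a·b·C(2a+2b+2, 2a+1)/(4a+4b+2); equivalently, (4a+4b+2)·S⊖(a, b | a, b) = a·b·C(2a+2b+2, 2a+1). (The Wiener index of the minuscule lattice Par(a×b), equation (4.2).) -/

import Mathlib

open Finset

open scoped Classical in
/-- `Par a b` is the set of Young diagrams (lower sets of boxes) fitting inside an
`a × b` rectangle, encoded as finsets of cells `(i, j)` with `i < a` and `j < b`. -/
noncomputable def Par (a b : ℕ) : Finset (Finset (ℕ × ℕ)) :=
  ((Finset.range a ×ˢ Finset.range b).powerset).filter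
    (fun S => IsLowerSet (S : Set (ℕ × ℕ)))

/-- `Sdiff a b c d` is the sum of `|λ ⊖ μ|` over all `λ ∈ Par(a×b)` and `μ ∈ Par(c×d)`. -/
noncomputable def Sdiff (a b c d : ℕ) : ℕ :=
  ∑ l ∈ Par a b, ∑ m ∈ Par c d, (symmDiff l m).card

noncomputable section WienerPS

def wF : PowerSeries (PowerSeries ℚ) :=
  PowerSeries.mk fun k => PowerSeries.mk fun u => ((k.choose u : ℚ))^2
def wM : PowerSeries (PowerSeries ℚ) :=
  PowerSeries.mk fun N => PowerSeries.mk fun a => ((2*N+2).choose (2*a+1) : ℚ)/2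
def wD : PowerSeries (PowerSeries ℚ) :=
  1 - PowerSeries.C (2*(1+PowerSeries.X)) * PowerSeries.X
    + PowerSeries.C ((1-PowerSeries.X)^2) * PowerSeries.X^2

lemma w_choose_rec (k u : ℕ) : ((u:ℚ)+1) * (k.choose (u+1)) = ((k:ℚ)-u) * k.choose u := by
  have h := Nat.choose_succ_right_eq k u
  rcases le_or_gt u k with h1 | h1
  · have : ((k.choose (u+1) * (u+1) : ℕ) : ℚ) = ((k.choose u * (k-u) : ℕ):ℚ) := by rw [h]
    push_cast [Nat.cast_sub h1] at this
    linarith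
  · rw [Nat.choose_eq_zero_of_lt h1, Nat.choose_eq_zero_of_lt (by omega)]; simp

/-- Legendre recurrence for the squared binomials. -/
lemma w_legendre (k u : ℕ) :
    ((k:ℚ)+2) * ((k+2).choose (u+2))^2 =
      (2*k+3) * (((k+1).choose (u+2))^2 + ((k+1).choose (u+1))^2)
      - (k+1) * ((k.choose (u+2))^2 - 2 * (k.choose (u+1))^2 + (k.choose u)^2) := by
  have e1 : ((k+2).choose (u+2) : ℚ) = k.choose u + 2 * k.choose (u+1) + k.choose (u+2) := by
    rw [Nat.choose_succ_succ' (k+1) (u+1), Nat.choose_succ_succ' k u, Nat.choose_succ_succ' k (u+1)]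
    push_cast; ring
  have e2 : ((k+1).choose (u+2) : ℚ) = k.choose (u+1) + k.choose (u+2) := by
    rw [Nat.choose_succ_succ' k (u+1)]; push_cast; ring
  have e3 : ((k+1).choose (u+1) : ℚ) = k.choose (u) + k.choose (u+1) := by
    rw [Nat.choose_succ_succ' k u]; push_cast; ring
  have r1 := w_choose_rec k u
  have r2 := w_choose_rec k (u+1)
  rw [e1, e2, e3]
  push_cast at *
  generalize (k.choose u : ℚ) = A at *
  generalize (k.choose (u+1) : ℚ) = B at *
  generalize (k.choose (u+2) : ℚ) = C at *
  have hu : ((u:ℚ)+1) ≠ 0 := by positivity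
  have hu2 : ((u:ℚ)+1+1) ≠ 0 := by positivity
  have hB : B = ((k:ℚ)-u) * A / (u+1) := by field_simp; linarith
  have hC : C = ((k:ℚ)-(u+1)) * B / (u+1+1) := by field_simp; linarith
  rw [hC, hB]; field_simp; ring

lemma w_coeff_D (G : PowerSeries (PowerSeries ℚ)) (k : ℕ) :
    PowerSeries.coeff (k+2) (wD * G) = PowerSeries.coeff (k+2) G
      - (2*(1+PowerSeries.X)) * PowerSeries.coeff (k+1) G
      + (1-PowerSeries.X)^2 * PowerSeries.coeff k G := by
  unfold wD
  rw [add_mul, sub_mul, one_mul, mul_assoc, mul_assoc, map_add, map_sub, PowerSeries.coeff_C_mul,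
    PowerSeries.coeff_C_mul, PowerSeries.coeff_succ_X_mul, PowerSeries.coeff_X_pow_mul]

lemma w_coeff_D_one (G : PowerSeries (PowerSeries ℚ)) :
    PowerSeries.coeff 1 (wD * G) = PowerSeries.coeff 1 G
      - (2*(1+PowerSeries.X)) * PowerSeries.coeff 0 G := by
  unfold wD
  rw [add_mul, sub_mul, one_mul, mul_assoc, mul_assoc, map_add, map_sub, PowerSeries.coeff_C_mul,
    PowerSeries.coeff_C_mul, PowerSeries.coeff_succ_X_mul, PowerSeries.coeff_X_pow_mul']
  simp

lemma w_coeff_D_zero (G : PowerSeries (PowerSeries ℚ)) :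
    PowerSeries.coeff 0 (wD * G) = PowerSeries.coeff 0 G := by
  simp [wD]

/-- coefficients of products by the quadratic polynomials occurring in `wD` -/
lemma w_c1 (f : PowerSeries ℚ) (u : ℕ) : PowerSeries.coeff (u+1) ((1+PowerSeries.X) * f) =
    PowerSeries.coeff (u+1) f + PowerSeries.coeff u f := by
  rw [add_mul, one_mul, map_add, PowerSeries.coeff_succ_X_mul]
lemma w_c1' (f : PowerSeries ℚ) : PowerSeries.coeff 0 ((1+PowerSeries.X) * f) =
    PowerSeries.coeff 0 f := by
  simp
lemma w_c2 (f : PowerSeries ℚ) (u : ℕ) : PowerSeries.coeff (u+2) ((1-PowerSeries.X)^2 * f) =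
    PowerSeries.coeff (u+2) f - 2 * PowerSeries.coeff (u+1) f + PowerSeries.coeff u f := by
  rw [sq, mul_assoc, sub_mul, one_mul, map_sub, PowerSeries.coeff_succ_X_mul, sub_mul, one_mul,
    map_sub, map_sub, PowerSeries.coeff_succ_X_mul, PowerSeries.coeff_succ_X_mul]
  ring
lemma w_c2' (f : PowerSeries ℚ) : PowerSeries.coeff 1 ((1-PowerSeries.X)^2 * f) =
    PowerSeries.coeff 1 f - 2 * PowerSeries.coeff 0 f := by
  rw [sq, mul_assoc, sub_mul, one_mul, map_sub, PowerSeries.coeff_succ_X_mul, sub_mul, one_mul,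
    map_sub, map_sub, PowerSeries.coeff_succ_X_mul]
  simp; ring
lemma w_c2'' (f : PowerSeries ℚ) : PowerSeries.coeff 0 ((1-PowerSeries.X)^2 * f) =
    PowerSeries.coeff 0 f := by
  simp

lemma w_F_rec (k : ℕ) : ((k:PowerSeries ℚ)+2) * PowerSeries.coeff (k+2) wF =
    (2*(k:PowerSeries ℚ)+3) * ((1+PowerSeries.X) * PowerSeries.coeff (k+1) wF)
     - ((k:PowerSeries ℚ)+1) * ((1-PowerSeries.X)^2 * PowerSeries.coeff k wF) := by
  have e1 : ((k:PowerSeries ℚ)+2) = PowerSeries.C ((k:ℚ)+2) := by rw [map_add, map_natCast, map_ofNat]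
  have e2 : (2*(k:PowerSeries ℚ)+3) = PowerSeries.C (2*(k:ℚ)+3) := by
    rw [map_add, map_mul, map_natCast, map_ofNat, map_ofNat]
  have e3 : ((k:PowerSeries ℚ)+1) = PowerSeries.C ((k:ℚ)+1) := by simp
  rw [e1, e2, e3]
  ext u
  rw [map_sub, PowerSeries.coeff_C_mul, PowerSeries.coeff_C_mul, PowerSeries.coeff_C_mul]
  rcases u with _ | _ | u
  · rw [w_c1', w_c2'']
    simp [wF]; ring
  · rw [w_c1, w_c2']
    simp [wF]; ring
  · rw [w_c1, w_c2]
    simp only [wF, PowerSeries.coeff_mk]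
    exact w_legendre k u

lemma w_F0 : PowerSeries.coeff 0 wF = 1 := by
  ext u
  rcases u with _ | u
  · simp [wF]
  · simp [wF, PowerSeries.coeff_one]
lemma w_F1 : PowerSeries.coeff 1 wF = 1 + PowerSeries.X := by
  ext u
  rcases u with _ | _ | u
  · simp [wF]
  · simp [wF, PowerSeries.coeff_one]
  · simp [wF, PowerSeries.coeff_one, PowerSeries.coeff_X, Nat.choose_eq_zero_of_lt (show 1 < u+1+1 by omega)]

lemma w_FD : wD * PowerSeries.derivative (PowerSeries ℚ) wF =
    (PowerSeries.C (1+PowerSeries.X) - PowerSeries.C ((1-PowerSeries.X)^2) * PowerSeries.X) * wF := by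
  apply PowerSeries.ext
  intro k
  rcases k with _ | _ | k
  · rw [w_coeff_D_zero, PowerSeries.coeff_derivative, sub_mul, map_sub, mul_assoc,
      PowerSeries.coeff_C_mul, PowerSeries.coeff_C_mul, PowerSeries.coeff_zero_X_mul]
    rw [w_F0, zero_add, w_F1]; simp
  · rw [w_coeff_D_one, PowerSeries.coeff_derivative, PowerSeries.coeff_derivative, sub_mul, map_sub,
      mul_assoc (PowerSeries.C ((1-PowerSeries.X)^2)), PowerSeries.coeff_C_mul, PowerSeries.coeff_C_mul, PowerSeries.coeff_succ_X_mul]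
    have := w_F_rec 0
    simp only [zero_add] at this ⊢
    push_cast at this ⊢
    linear_combination this
  · rw [w_coeff_D, PowerSeries.coeff_derivative, PowerSeries.coeff_derivative,
      PowerSeries.coeff_derivative, sub_mul, map_sub,
      mul_assoc (PowerSeries.C ((1-PowerSeries.X)^2)), PowerSeries.coeff_C_mul, PowerSeries.coeff_C_mul, PowerSeries.coeff_succ_X_mul]
    have := w_F_rec (k+1)
    push_cast at this ⊢
    linear_combination this

instance : IsAddTorsionFree (PowerSeries ℚ) := IsAddTorsionFree.of_module_rat _

lemma w_gen {A : Type*} [CommRing A] [IsAddTorsionFree A] (c e : A) (F : PowerSeries A)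
    (h : (1 - PowerSeries.C (2*c) * PowerSeries.X + PowerSeries.C e * PowerSeries.X^2) *
      PowerSeries.derivative A F = (PowerSeries.C c - PowerSeries.C e * PowerSeries.X) * F)
    (h0 : PowerSeries.constantCoeff F = 1) :
    (1 - PowerSeries.C (2*c) * PowerSeries.X + PowerSeries.C e * PowerSeries.X^2) * (F * F) = 1 := by
  apply PowerSeries.derivative.ext
  · have hD : PowerSeries.derivative A
        (1 - PowerSeries.C (2*c) * PowerSeries.X + PowerSeries.C e * PowerSeries.X^2) =
        -2 * (PowerSeries.C c - PowerSeries.C e * PowerSeries.X) := by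
      rw [map_add, map_sub, Derivation.leibniz, Derivation.leibniz, PowerSeries.derivative_C,
        PowerSeries.derivative_C, PowerSeries.derivative_X, PowerSeries.derivative_pow,
        PowerSeries.derivative_X, PowerSeries.derivative_one]
      simp only [smul_eq_mul, map_mul, map_ofNat]
      push_cast
      ring
    rw [Derivation.leibniz, Derivation.leibniz, hD, PowerSeries.derivative_one]
    simp only [smul_eq_mul]
    linear_combination (2 * F) * h
  · simp [h0]

lemma w_DFF : wD * (wF * wF) = 1 :=
  w_gen (1+PowerSeries.X) ((1-PowerSeries.X)^2) wF w_FD (by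
    rw [← PowerSeries.coeff_zero_eq_constantCoeff_apply]; exact w_F0)

lemma w_DM : wD * wM = 1 := by
  have s2 : ∀ f : PowerSeries ℚ, 2*(1+PowerSeries.X) * f = PowerSeries.C 2 * ((1+PowerSeries.X)*f) := by
    intro f; rw [map_ofNat]; ring
  apply PowerSeries.ext
  intro k
  rcases k with _ | _ | k
  · rw [w_coeff_D_zero]
    ext u
    rcases u with _ | u
    · simp [wM]
    · simp [wM, PowerSeries.coeff_one, Nat.choose_eq_zero_of_lt (show 2 < 2*(u+1)+1 by omega)]
  · rw [zero_add, w_coeff_D_one, s2]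
    ext u
    rw [map_sub, PowerSeries.coeff_C_mul]
    rcases u with _ | _ | u
    · rw [w_c1']; simp [wM, PowerSeries.coeff_one]; norm_num
    · rw [w_c1]; simp [wM, PowerSeries.coeff_one]; norm_num [Nat.choose]
    · rw [w_c1]; simp [wM, PowerSeries.coeff_one, Nat.choose_eq_zero_of_lt (show 4 < 2*(u+1+1)+1 by omega), Nat.choose_eq_zero_of_lt (show 2 < 2*(u+1+1)+1 by omega), Nat.choose_eq_zero_of_lt (show 2 < 2*(u+1)+1 by omega)]
  · rw [w_coeff_D, s2]
    ext u
    rw [map_add, map_sub, PowerSeries.coeff_C_mul]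
    have pas : ∀ n k : ℕ, ((n+2).choose (k+2) : ℚ) = n.choose k + 2 * n.choose (k+1) + n.choose (k+2) := by
      intro n k
      rw [Nat.choose_succ_succ' (n+1) (k+1), Nat.choose_succ_succ' n k, Nat.choose_succ_succ' n (k+1)]
      push_cast; ring
    have pas1 : ∀ n : ℕ, ((n+2).choose 1 : ℚ) = n.choose 1 + 2 := by
      intro n; simp
    have hr : PowerSeries.coeff u (PowerSeries.coeff (k+1+1) (1 : PowerSeries (PowerSeries ℚ))) = 0 := by
      simp [PowerSeries.coeff_one]
    rw [hr]
    rcases u with _ | _ | u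
    · rw [w_c1', w_c2'']
      simp [wM]; ring
    · rw [w_c1, w_c2']
      simp only [wM, PowerSeries.coeff_mk]
      rw [show 2*(k+2)+2 = (2*k+2)+2+2 by ring, show 2*(k+1)+2 = (2*k+2)+2 by ring]
      simp only [zero_add, mul_one, mul_zero, show 2+1 = 1+2 from rfl, pas]
      simp only [show 1+1+2=2+2 from rfl, show 1+1=0+2 from rfl, pas, pas1, Nat.choose_zero_right]
      simp only [show 1+2=3 from rfl, zero_add, pas1]
      push_cast
      ring
    · rw [w_c1, w_c2]
      simp only [wM, PowerSeries.coeff_mk]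
      rw [show 2*(k+2)+2 = (2*k+2)+2+2 by ring, show 2*(k+1)+2 = (2*k+2)+2 by ring]
      rw [show 2*(u+1+1)+1 = (2*u+1)+2+2 by ring, show 2*(u+1)+1 = (2*u+1)+2 by ring]
      have q0 := pas (2*k+2+2) (2*u+1+2)
      have q1 := pas (2*k+2) (2*u+1)
      have q2 := pas (2*k+2) (2*u+1+1)
      have q3 := pas (2*k+2) (2*u+1+2)
      rw [show 2*u+1+1+2 = 2*u+1+2+1 by ring] at q2
      rw [show 2*u+1+2 = 2*u+1+1+1 by ring] at *
      rw [show 2*u+1+1+1+2 = 2*u+1+1+1+1+1 by ring] at *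
      rw [q0, q1, q2, q3]
      ring

theorem w_conv (N a : ℕ) : ∑ p ∈ antidiagonal N, ∑ q ∈ antidiagonal a,
    ((p.1.choose q.1 : ℚ))^2 * ((p.2.choose q.2 : ℚ))^2 = ((2*N+2).choose (2*a+1) : ℚ)/2 := by
  have h : wF * wF = wM := by
    have h1 := w_DFF
    have h2 := w_DM
    calc wF * wF = (wD * wM) * (wF * wF) := by rw [h2, one_mul]
      _ = wM * (wD * (wF*wF)) := by ring
      _ = wM := by rw [h1, mul_one]
  have h3 := congrArg (fun f => PowerSeries.coeff a (PowerSeries.coeff N f)) h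
  simpa [wF, wM, PowerSeries.coeff_mul] using h3
end WienerPS

lemma mem_Par {a b : ℕ} {l : Finset (ℕ × ℕ)} : l ∈ Par a b ↔
    (∀ i j, (i,j) ∈ l → i < a ∧ j < b) ∧
    (∀ i j i' j', i' ≤ i → j' ≤ j → (i,j) ∈ l → (i',j') ∈ l) := by
  unfold Par
  simp only [mem_filter, mem_powerset]
  constructor
  · rintro ⟨h1, h2⟩
    refine ⟨fun i j h => by simpa using h1 h, fun i j i' j' hi hj h => ?_⟩
    exact h2 (a := (i,j)) (b := (i',j')) ⟨hi, hj⟩ h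
  · rintro ⟨h1, h2⟩
    refine ⟨fun ⟨i,j⟩ h => by simpa using h1 i j h, ?_⟩
    rintro ⟨i,j⟩ ⟨i',j'⟩ ⟨hi,hj⟩ h
    exact h2 i j i' j' hi hj h

lemma Par_zero_left (b : ℕ) : Par 0 b = {∅} := by
  ext l; rw [mem_Par, mem_singleton]
  constructor
  · rintro ⟨h, -⟩
    rw [eq_empty_iff_forall_notMem]; rintro ⟨i,j⟩ hh; have := h i j hh; omega
  · rintro rfl; simp

lemma Par_zero_right (a : ℕ) : Par a 0 = {∅} := by
  ext l; rw [mem_Par, mem_singleton]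
  constructor
  · rintro ⟨h, -⟩
    rw [eq_empty_iff_forall_notMem]; rintro ⟨i,j⟩ hh; have := h i j hh; omega
  · rintro rfl; simp

/-- shift to the right by one column -/
def shR : (ℕ × ℕ) ↪ (ℕ × ℕ) := ⟨fun c => (c.1, c.2+1), fun ⟨a,b⟩ ⟨c,d⟩ h => by simpa using h⟩
/-- embedding as first column -/
def col0 : ℕ ↪ (ℕ × ℕ) := ⟨fun i => (i,0), fun a b h => by simpa using h⟩

lemma shR_apply (c : ℕ × ℕ) : shR c = (c.1, c.2+1) := rfl
lemma col0_apply (i : ℕ) : col0 i = (i, 0) := rfl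

/-- add a full first column of height `a` -/
def addCol (a : ℕ) (l : Finset (ℕ × ℕ)) : Finset (ℕ × ℕ) := (range a).map col0 ∪ l.map shR

lemma mem_addCol_zero {a i : ℕ} {l : Finset (ℕ × ℕ)} : (i,0) ∈ addCol a l ↔ i < a := by
  simp [addCol, shR_apply, col0_apply]
lemma mem_addCol_succ {a i j : ℕ} {l : Finset (ℕ × ℕ)} : (i,j+1) ∈ addCol a l ↔ (i,j) ∈ l := by
  simp [addCol, shR_apply, col0_apply]

lemma addCol_inj {a : ℕ} {l m : Finset (ℕ × ℕ)} (h : addCol a l = addCol a m) : l = m := by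
  ext ⟨i,j⟩; rw [← mem_addCol_succ (a := a), h, mem_addCol_succ]

lemma Par_peel {M : Type*} [AddCommMonoid M] (a b : ℕ) (g : Finset (ℕ × ℕ) → M) :
    ∑ l ∈ Par (a+1) (b+1), g l = ∑ l ∈ Par a (b+1), g l + ∑ l ∈ Par (a+1) b, g (addCol (a+1) l) := by
  have h1 : (Par (a+1) (b+1)).filter (fun l => ¬ (a,0) ∈ l) = Par a (b+1) := by
    ext l
    simp only [mem_filter, mem_Par]
    constructor
    · rintro ⟨⟨h1, h2⟩, h3⟩
      refine ⟨fun i j h => ⟨?_, (h1 i j h).2⟩, h2⟩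
      by_contra hc
      exact h3 (h2 i j a 0 (by omega) (by omega) h)
    · rintro ⟨h1, h2⟩
      refine ⟨⟨fun i j h => ?_, h2⟩, fun h => ?_⟩
      · have := h1 i j h; omega
      · have := h1 _ _ h; omega
  have h2 : (Par (a+1) (b+1)).filter (fun l => (a,0) ∈ l) = (Par (a+1) b).image (addCol (a+1)) := by
    ext l
    simp only [mem_filter, mem_image]
    constructor
    · rintro ⟨h, h3⟩
      rw [mem_Par] at h
      obtain ⟨h1, h2⟩ := h
      have key : ∀ i j, (i,j) ∈ l.preimage shR shR.injective.injOn ↔ (i,j+1) ∈ l := by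
        intro i j; rw [mem_preimage]; rfl
      refine ⟨l.preimage shR shR.injective.injOn, ?_, ?_⟩
      · rw [mem_Par]
        refine ⟨fun i j h => ?_, fun i j i' j' hi hj h => ?_⟩
        · rw [key] at h; have := h1 _ _ h; omega
        · rw [key] at h ⊢; exact h2 _ _ _ _ hi (by omega) h
      · ext ⟨i,j⟩
        cases j with
        | zero =>
          rw [mem_addCol_zero]
          exact ⟨fun h => h2 a 0 i 0 (by omega) le_rfl h3, fun h => (h1 _ _ h).1⟩
        | succ j => rw [mem_addCol_succ, key]
    · rintro ⟨m, hm, rfl⟩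
      rw [mem_Par] at hm
      obtain ⟨h1, h2⟩ := hm
      refine ⟨?_, by rw [mem_addCol_zero]; omega⟩
      rw [mem_Par]
      refine ⟨fun i j h => ?_, fun i j i' j' hi hj h => ?_⟩
      · cases j with
        | zero => rw [mem_addCol_zero] at h; omega
        | succ j => rw [mem_addCol_succ] at h; have := h1 _ _ h; omega
      · cases j' with
        | zero =>
          rw [mem_addCol_zero]
          cases j with
          | zero => rw [mem_addCol_zero] at h; omega
          | succ j => rw [mem_addCol_succ] at h; have := h1 _ _ h; omega
        | succ j' =>
          rw [mem_addCol_succ]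
          cases j with
          | zero => omega
          | succ j => rw [mem_addCol_succ] at h; exact h2 _ _ _ _ hi (by omega) h
  rw [← sum_filter_not_add_sum_filter (Par (a+1) (b+1)) (fun l => (a,0) ∈ l), h1, h2, sum_image]
  intro x _ y _ h
  exact addCol_inj h

lemma card_Par (a b : ℕ) : (Par a b).card = (a+b).choose a := by
  induction a generalizing b with
  | zero => simp [Par_zero_left]
  | succ a iha =>
    induction b with
    | zero => simp [Par_zero_right]
    | succ b ihb =>
      have := Par_peel a b (fun _ => (1:ℕ))
      simp only [sum_const, smul_eq_mul, mul_one] at this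
      rw [this, iha, ihb, show a+1+(b+1) = (a+(b+1))+1 by ring, Nat.choose_succ_succ',
        show a+1+b = a+(b+1) by ring]

/-- number of cells on the `k`th diagonal -/
def dg (a k : ℕ) (l : Finset (ℕ × ℕ)) : ℕ := (l.filter (fun c => c.2 + a = c.1 + k)).card
/-- number of up steps among the first `k` steps -/
def uu (a k : ℕ) (l : Finset (ℕ × ℕ)) : ℤ := (min a k : ℕ) - (dg a k l : ℤ)

lemma uu_up (a k : ℕ) (l : Finset (ℕ × ℕ)) : uu (a+1) (k+1) l = uu a k l + 1 := by
  have : dg (a+1) (k+1) l = dg a k l := by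
    unfold dg; congr 1; ext c; simp only [mem_filter]; 
    constructor <;> rintro ⟨h1,h2⟩ <;> exact ⟨h1, by omega⟩
  unfold uu; rw [this]; omega

lemma uu_right (a k : ℕ) (l : Finset (ℕ × ℕ)) : uu a (k+1) (addCol a l) = uu a k l := by
  have : dg a (k+1) (addCol a l) = dg a k l + if k + 1 ≤ a then 1 else 0 := by
    unfold dg addCol
    rw [filter_union, card_union_of_disjoint, add_comm]
    · congr 1
      · rw [filter_map, card_map]; congr 1; ext c; simp only [mem_filter, shR_apply, Function.comp]
        constructor <;> rintro ⟨h1,h2⟩ <;> exact ⟨h1, by omega⟩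
      · rw [filter_map, card_map]
        split_ifs with h
        · rw [card_eq_one]; refine ⟨a-(k+1), ?_⟩
          ext i; simp [col0_apply]; omega
        · rw [card_eq_zero]; ext i; simp [col0_apply]; omega
    · apply disjoint_filter_filter
      rw [disjoint_left]; rintro ⟨i,j⟩; simp only [mem_map, col0_apply, shR_apply]
      rintro ⟨x, -, hx⟩ ⟨y, -, hy⟩
      simp only [Prod.mk.injEq] at hx hy; omega
  unfold uu; rw [this]; split_ifs <;> push_cast <;> omega

lemma uu_empty (a k : ℕ) : uu a k ∅ = (min a k : ℕ) := by simp [uu, dg]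

/-- binomial coefficient with integer lower index -/
def cc (r : ℕ) (p : ℤ) : ℚ := if p < 0 then 0 else (r.choose p.toNat : ℚ)

lemma cc_nat (r p : ℕ) : cc r p = r.choose p := by simp [cc]
lemma cc_neg (r : ℕ) (p : ℤ) (h : p < 0) : cc r p = 0 := by simp [cc, h]
lemma cc_big (r : ℕ) (p : ℤ) (h : r < p) : cc r p = 0 := by
  unfold cc; rw [if_neg (by omega), Nat.choose_eq_zero_of_lt (by omega)]; simp

lemma pascal_sum (k : ℕ) (g : ℕ → ℚ) : ∑ u ∈ range (k+2), ((k+1).choose u : ℚ) * g u =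
    ∑ u ∈ range (k+1), (k.choose u : ℚ) * (g u + g (u+1)) := by
  rw [sum_range_succ']
  simp only [Nat.choose_succ_succ', Nat.choose_zero_right, Nat.cast_add, add_mul, mul_add, sum_add_distrib]
  have := sum_range_succ' (fun u => (k.choose u : ℚ) * g u) (k+1)
  rw [sum_range_succ] at this
  simp only [Nat.choose_succ_self, Nat.choose_zero_right] at this
  push_cast at *
  linarith

lemma Par_dist (k : ℕ) : ∀ (a b : ℕ), k ≤ a + b → ∀ f : ℤ → ℚ, ∑ l ∈ Par a b, f (uu a k l) =
    ∑ u ∈ range (k+1), (k.choose u : ℚ) * (cc (a+b-k) (a-u) * f u) := by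
  induction k with
  | zero =>
    intro a b _ f
    have : ∀ l ∈ Par a b, f (uu a 0 l) = f 0 := by
      intro l hl
      rw [mem_Par] at hl
      congr 1
      have : dg a 0 l = 0 := by
        unfold dg; rw [card_eq_zero, filter_eq_empty_iff]
        rintro ⟨i,j⟩ h; have := hl.1 i j h; simp; omega
      simp [uu, this]
    rw [sum_congr rfl this]
    simp [card_Par, cc_nat]
  | succ k ih =>
    intro a b hk f
    rcases a with _ | a
    · rw [Par_zero_left, sum_singleton, uu_empty, sum_range_succ', sum_eq_zero]
      · simp [cc]
      · intro u _
        rw [cc_neg _ _ (by push_cast; omega)]; simp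
    rcases b with _ | b
    · rw [Par_zero_right, sum_singleton, uu_empty, sum_range_succ, sum_eq_zero]
      · have : ((a+1:ℕ):ℤ) - ((k+1:ℕ):ℤ) = ((a+1+0-(k+1) : ℕ):ℤ) := by omega
        rw [this, cc_nat]
        simp [show k ≤ a by omega]
      · intro u hu
        rw [mem_range] at hu
        rw [cc_big _ _ (by omega)]; simp
    rw [Par_peel, pascal_sum]
    simp only [uu_right]
    simp only [uu_up]
    rw [ih a (b+1) (by omega) (fun x => f (x+1)), ih (a+1) b (by omega) f, ← sum_add_distrib]
    apply sum_congr rfl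
    intro u _
    rw [show a+1+(b+1)-(k+1) = a+(b+1)-k by omega, show a+1+b-k = a+(b+1)-k by omega]
    push_cast
    rw [show (a:ℤ)+1-(u+1) = a-u by ring]; ring

lemma diag_symm {a b k : ℕ} {l m : Finset (ℕ × ℕ)} (hl : l ∈ Par a b) (hm : m ∈ Par a b) :
    (((symmDiff l m).filter (fun c => c.2 + a = c.1 + k)).card : ℤ) = |uu a k l - uu a k m| := by
  have h0 : uu a k l - uu a k m = (dg a k m : ℤ) - dg a k l := by unfold uu; ring
  rw [h0]
  rw [mem_Par] at hl hm
  set L := l.filter (fun c => c.2 + a = c.1 + k) with hL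
  set M := m.filter (fun c => c.2 + a = c.1 + k) with hM
  have e : (symmDiff l m).filter (fun c => c.2 + a = c.1 + k) = (L \ M) ∪ (M \ L) := by
    ext c; simp only [mem_filter, mem_symmDiff, mem_union, mem_sdiff, hL, hM]; tauto
  rw [e]
  have hc : L ⊆ M ∨ M ⊆ L := by
    by_contra! hcon
    obtain ⟨h1, h2⟩ := hcon
    rw [not_subset] at h1 h2
    obtain ⟨⟨i,j⟩, hx, hx'⟩ := h1
    obtain ⟨⟨i',j'⟩, hy, hy'⟩ := h2
    simp only [hL, hM, mem_filter, not_and] at hx hx' hy hy'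
    rcases le_total i i' with h | h
    · exact hx' (hm.2 _ _ _ _ h (by omega) hy.1) hx.2
    · exact hy' (hl.2 _ _ _ _ h (by omega) hx.1) hy.2
  change _ = |(M.card : ℤ) - L.card|
  rcases hc with h | h
  · rw [sdiff_eq_empty_iff_subset.2 h, empty_union, card_sdiff_of_subset h, abs_of_nonneg] <;>
    have := card_le_card h <;> omega
  · rw [sdiff_eq_empty_iff_subset.2 h, union_empty, card_sdiff_of_subset h, abs_of_nonpos] <;>
    have := card_le_card h <;> omega

lemma card_symm {a b : ℕ} {l m : Finset (ℕ × ℕ)} (hl : l ∈ Par a b) (hm : m ∈ Par a b) :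
    ((symmDiff l m).card : ℤ) = ∑ k ∈ range (a+b+1), |uu a k l - uu a k m| := by
  have hlt : ∀ c ∈ symmDiff l m, c.1 < a ∧ c.2 < b := by
    rintro ⟨i,j⟩ h
    rw [mem_symmDiff] at h
    rcases h with h | h
    · exact (mem_Par.1 hl).1 _ _ h.1
    · exact (mem_Par.1 hm).1 _ _ h.1
  rw [card_eq_sum_card_fiberwise (f := fun c => c.2 + a - c.1) (t := range (a+b+1))]
  · push_cast
    apply sum_congr rfl
    intro k _
    rw [← diag_symm hl hm]
    congr 2
    apply filter_congr
    intro c hc; have := hlt c hc; constructor <;> intro h <;> omega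
  · intro c hc; have := hlt c hc; simp; omega

lemma cc_down (r : ℕ) (p : ℤ) : ((r:ℚ)+1) * cc r (p-1) = p * cc (r+1) p := by
  rcases lt_trichotomy p 0 with h | h | h
  · rw [cc_neg _ _ h, cc_neg _ _ (by omega)]; simp
  · subst h; rw [cc_neg _ _ (by omega)]; simp
  · obtain ⟨q, rfl⟩ : ∃ q : ℕ, p = (q:ℤ) + 1 := ⟨(p-1).toNat, by omega⟩
    rw [show (q:ℤ)+1-1 = (q:ℤ) by ring, show (q:ℤ)+1 = ((q+1:ℕ):ℤ) by push_cast; ring, cc_nat, cc_nat]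
    have := Nat.add_one_mul_choose_eq r q
    have h2 : (((r+1) * r.choose q : ℕ):ℚ) = (((r+1).choose (q+1) * (q+1) : ℕ) : ℚ) := by rw [this]
    push_cast at h2 ⊢; linarith

lemma cc_pascal (r : ℕ) (p : ℤ) : cc (r+1) p = cc r (p-1) + cc r p := by
  rcases lt_trichotomy p 0 with h | h | h
  · rw [cc_neg _ _ h, cc_neg _ _ (by omega), cc_neg _ _ h]; simp
  · subst h; rw [cc_neg _ (0-1) (by omega)]; simp [cc]
  · obtain ⟨q, rfl⟩ : ∃ q : ℕ, p = (q:ℤ) + 1 := ⟨(p-1).toNat, by omega⟩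
    rw [show (q:ℤ)+1-1 = (q:ℤ) by ring, show (q:ℤ)+1 = ((q+1:ℕ):ℤ) by push_cast; ring, cc_nat, cc_nat,
      cc_nat, Nat.choose_succ_succ']
    push_cast; ring

lemma cc_same (r : ℕ) (p : ℤ) : ((r:ℚ)+1) * cc r p = (r+1-p) * cc (r+1) p := by
  have h1 := cc_down r p
  have h2 := cc_pascal r p
  linear_combination (-((r:ℚ)+1)) * h2 - h1

lemma cc_ratio (r : ℕ) (p : ℤ) : (p:ℚ) * cc r p = (r+1-p) * cc r (p-1) := by
  have h1 := cc_down r p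
  have h2 := cc_pascal r p
  linear_combination (-(p:ℚ)) * h2 - h1

lemma point (r : ℕ) (a : ℤ) (u v : ℤ) :
    ((r:ℚ)+1) * (cc r (a-u) * (cc r (a-v) * |(u:ℚ)-v|) + cc r (a-u) * (cc r (a-v-1) * |(u:ℚ)-v-1|)
      + cc r (a-u-1) * (cc r (a-v) * |(u:ℚ)-v+1|) + cc r (a-u-1) * (cc r (a-v-1) * |(u:ℚ)-v|)) =
    r * (cc (r+1) (a-u) * (cc (r+1) (a-v) * |(u:ℚ)-v|)) +
      if u = v then 2 * (r+1) * (cc r (a-u) * cc r (a-u-1)) else 0 := by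
  split_ifs with h
  · subst h
    simp; ring
  · have d1 := cc_down r (a-u)
    have d2 := cc_down r (a-v)
    have s1 := cc_same r (a-u)
    have s2 := cc_same r (a-v)
    have hr : ((r:ℚ)+1) ≠ 0 := by positivity
    have d1' : cc r (a-u-1) = ((a-u:ℤ):ℚ) * cc (r+1) (a-u) / (r+1) := by field_simp; linarith
    have d2' : cc r (a-v-1) = ((a-v:ℤ):ℚ) * cc (r+1) (a-v) / (r+1) := by field_simp; linarith
    have s1' : cc r (a-u) = (r+1-((a-u:ℤ):ℚ)) * cc (r+1) (a-u) / (r+1) := by field_simp; linarith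
    have s2' : cc r (a-v) = (r+1-((a-v:ℤ):ℚ)) * cc (r+1) (a-v) / (r+1) := by field_simp; linarith
    rw [d1', d2', s1', s2']
    push_cast
    rcases lt_or_gt_of_ne h with h | h
    · have h' : (u:ℚ) + 1 ≤ v := by exact_mod_cast h
      rw [abs_of_nonpos (show (u:ℚ)-v ≤ 0 by linarith), abs_of_nonpos (show (u:ℚ)-v-1 ≤ 0 by linarith),
        abs_of_nonpos (show (u:ℚ)-v+1 ≤ 0 by linarith)]
      field_simp; ring
    · have h' : (v:ℚ) + 1 ≤ u := by exact_mod_cast h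
      rw [abs_of_nonneg (show 0 ≤ (u:ℚ)-v by linarith), abs_of_nonneg (show 0 ≤ (u:ℚ)-v-1 by linarith),
        abs_of_nonneg (show 0 ≤ (u:ℚ)-v+1 by linarith)]
      field_simp; ring

/-- total distance at time `k` between two paths with `r` remaining steps -/
def wT (a r k : ℕ) : ℚ := ∑ u ∈ range (k+1), (k.choose u : ℚ) * (cc r (a-u) *
  ∑ v ∈ range (k+1), (k.choose v : ℚ) * (cc r (a-v) * |((u:ℤ):ℚ) - ((v:ℤ):ℚ)|))

def wZ (a r k : ℕ) : ℚ := ∑ u ∈ range (k+1), (k.choose u : ℚ)^2 * (cc r (a-u) * cc r (a-u-1))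

lemma wT_step (a r k : ℕ) : ((r:ℚ)+1) * wT a r (k+1) = r * wT a (r+1) k + 2 * (r+1) * wZ a r k := by
  have key : ∀ u ∈ range (k+1), ∀ v ∈ range (k+1), (k.choose u : ℚ) * (k.choose v) *
      (if (u:ℤ) = v then 2 * ((r:ℚ)+1) * (cc r (a-u) * cc r (a-u-1)) else 0) =
      if u = v then 2 * (r+1) * ((k.choose u : ℚ)^2 * (cc r (a-u) * cc r (a-u-1))) else 0 := by
    intro u _ v _
    by_cases h : u = v
    · subst h; simp; ring
    · simp [h]
  have hz : 2 * ((r:ℚ)+1) * wZ a r k = ∑ u ∈ range (k+1), ∑ v ∈ range (k+1),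
      (k.choose u : ℚ) * (k.choose v) *
      (if (u:ℤ) = v then 2 * ((r:ℚ)+1) * (cc r (a-u) * cc r (a-u-1)) else 0) := by
    rw [sum_congr rfl (fun u hu => sum_congr rfl (key u hu))]
    unfold wZ
    rw [mul_sum]
    apply sum_congr rfl
    intro u hu
    rw [sum_ite_eq, if_pos hu]
  rw [hz]
  unfold wT
  rw [pascal_sum]
  simp only [pascal_sum]
  simp only [mul_sum, ← sum_add_distrib]
  apply sum_congr rfl
  intro u _
  apply sum_congr rfl
  intro v _
  have := point r a u v
  push_cast at this ⊢
  rw [show (a:ℤ)-(u+1) = a-u-1 by ring, show (a:ℤ)-(v+1) = a-v-1 by ring,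
    show (u:ℚ)-(v+1) = u-v-1 by ring, show (u:ℚ)+1-v = u-v+1 by ring,
    show (u:ℚ)+1-(v+1) = u-v by ring]
  linear_combination ((k.choose u : ℚ) * k.choose v) * this

lemma wT_zero (a r : ℕ) : wT a r 0 = 0 := by simp [wT]

lemma cc_zero_ne (p : ℤ) (h : p ≠ 0) : cc 0 p = 0 := by
  rcases lt_or_gt_of_ne h with h | h
  · exact cc_neg _ _ h
  · exact cc_big _ _ (by simpa using h)

lemma wT_end (a k : ℕ) : wT a 0 k = 0 := by
  unfold wT
  apply sum_eq_zero
  intro u _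
  by_cases hu : (a:ℤ) - u = 0
  · rw [sum_eq_zero]
    · simp
    · intro v _
      by_cases hv : (a:ℤ) - v = 0
      · rw [show (u:ℤ) = v by omega]; simp
      · rw [cc_zero_ne _ hv]; simp
  · rw [cc_zero_ne _ hu]; simp

lemma wT_sum (a n : ℕ) : ∑ k ∈ range (n+1), wT a (n-k) k =
    ∑ k ∈ range n, ((n:ℚ)-k) * wZ a (n-k-1) k := by
  have hs : ∀ k ∈ range n, ((n:ℚ)-k) * wZ a (n-k-1) k =
      (((n:ℚ)-(k+1:ℕ)+1) * wT a (n-(k+1)) (k+1) - ((n:ℚ)-k+1) * wT a (n-k) k) / 2 + wT a (n-k) k := by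
    intro k hk
    rw [mem_range] at hk
    obtain ⟨r, rfl⟩ : ∃ r, n = k + 1 + r := ⟨n-k-1, by omega⟩
    rw [show k+1+r-k-1 = r by omega, show k+1+r-k = r+1 by omega, show k+1+r-(k+1) = r by omega]
    have := wT_step a r k
    push_cast
    linear_combination (-1/2) * this
  rw [sum_congr rfl hs, sum_add_distrib, ← sum_div,
    sum_range_sub (fun k => ((n:ℚ)-k+1) * wT a (n-k) k), sum_range_succ]
  simp [wT_zero, wT_end]

lemma Sdiff_eq (a b : ℕ) : (Sdiff a b a b : ℚ) = ∑ k ∈ range (a+b+1), wT a (a+b-k) k := by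
  unfold Sdiff
  push_cast
  have h1 : ∀ l ∈ Par a b, ∀ m ∈ Par a b, ((symmDiff l m).card : ℚ) =
      ∑ k ∈ range (a+b+1), |((uu a k l : ℤ):ℚ) - ((uu a k m : ℤ) : ℚ)| := by
    intro l hl m hm
    have := card_symm hl hm
    have h2 : (((symmDiff l m).card : ℤ) : ℚ) =
      ((∑ k ∈ range (a+b+1), |uu a k l - uu a k m| : ℤ) : ℚ) := by rw [this]
    push_cast at h2
    exact h2
  rw [sum_congr rfl (fun l hl => sum_congr rfl (h1 l hl))]
  rw [sum_congr rfl (fun l _ => sum_comm), sum_comm]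
  apply sum_congr rfl
  intro k hk
  rw [mem_range] at hk
  rw [sum_congr rfl (fun l _ => Par_dist k a b (by omega) (fun x => |((uu a k l : ℤ):ℚ) - (x:ℚ)|))]
  rw [Par_dist k a b (by omega) (fun y => ∑ v ∈ range (k+1), (k.choose v : ℚ) *
    (cc (a+b-k) (a-v) * |(y:ℚ) - ((v:ℤ):ℚ)|))]
  rfl

lemma anti_conv (k l c : ℕ) (w : ℤ → ℚ) :
    ∑ u ∈ range (k+1), (k.choose u : ℚ)^2 * (w (c-u) * cc l (c-u)^2) =
    ∑ q ∈ antidiagonal c, (k.choose q.1 : ℚ)^2 * (w q.2 * (l.choose q.2 : ℚ)^2) := by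
  rw [Finset.Nat.sum_antidiagonal_eq_sum_range_succ_mk]
  have e1 : ∑ u ∈ range (k+1), (k.choose u : ℚ)^2 * (w (c-u) * cc l (c-u)^2) =
      ∑ u ∈ range (k+c+1), (k.choose u : ℚ)^2 * (w (c-u) * cc l (c-u)^2) := by
    apply sum_subset
    · intro u; simp only [mem_range]; omega
    · intro u _ hu; rw [mem_range] at hu
      rw [Nat.choose_eq_zero_of_lt (by omega)]; simp
  have e2 : ∑ u ∈ range (c+1), (k.choose u : ℚ)^2 * (w (c-u) * cc l (c-u)^2) =
      ∑ u ∈ range (k+c+1), (k.choose u : ℚ)^2 * (w (c-u) * cc l (c-u)^2) := by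
    apply sum_subset
    · intro u; simp only [mem_range]; omega
    · intro u _ hu; rw [mem_range] at hu
      rw [cc_neg _ _ (by omega)]; simp
  rw [e1, ← e2]
  apply sum_congr rfl
  intro u hu
  rw [mem_range] at hu
  rw [show (c:ℤ)-u = ((c-u:ℕ):ℤ) by omega, cc_nat]

lemma anti_swap (N c : ℕ) (f : ℕ → ℕ → ℕ → ℕ → ℚ) :
    ∑ p ∈ antidiagonal N, ∑ q ∈ antidiagonal c, f p.1 p.2 q.1 q.2 =
    ∑ p ∈ antidiagonal N, ∑ q ∈ antidiagonal c, f p.2 p.1 q.2 q.1 := by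
  rw [← Finset.Nat.sum_antidiagonal_swap]
  apply sum_congr rfl
  intro p _
  rw [← Finset.Nat.sum_antidiagonal_swap]
  rfl

lemma conv_v (N c : ℕ) : ∑ p ∈ antidiagonal N, ∑ q ∈ antidiagonal c,
    (p.1.choose q.1 : ℚ)^2 * ((q.2:ℚ) * (p.2.choose q.2 : ℚ)^2) =
    c * ((2*N+2).choose (2*c+1) : ℚ) / 4 := by
  have h := anti_swap N c (fun k l u v => (k.choose u : ℚ)^2 * ((v:ℚ) * (l.choose v : ℚ)^2))
  have h2 := w_conv N c
  have h3 : ∑ p ∈ antidiagonal N, ∑ q ∈ antidiagonal c,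
      (p.1.choose q.1 : ℚ)^2 * ((q.2:ℚ) * (p.2.choose q.2 : ℚ)^2) +
      ∑ p ∈ antidiagonal N, ∑ q ∈ antidiagonal c,
      (p.2.choose q.2 : ℚ)^2 * ((q.1:ℚ) * (p.1.choose q.1 : ℚ)^2) =
      c * ∑ p ∈ antidiagonal N, ∑ q ∈ antidiagonal c,
        (p.1.choose q.1 : ℚ)^2 * (p.2.choose q.2 : ℚ)^2 := by
    simp only [← sum_add_distrib, mul_sum]
    apply sum_congr rfl; intro p _
    apply sum_congr rfl; intro q hq
    rw [HasAntidiagonal.mem_antidiagonal] at hq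
    rw [← hq]; push_cast; ring
  rw [h2] at h3
  linarith

lemma conv_lv (N c : ℕ) : ∑ p ∈ antidiagonal N, ∑ q ∈ antidiagonal c,
    (p.1.choose q.1 : ℚ)^2 * (((p.2:ℚ)-q.2) * (p.2.choose q.2 : ℚ)^2) =
    ((N:ℚ)-c) * ((2*N+2).choose (2*c+1) : ℚ) / 4 := by
  have h := anti_swap N c (fun k l u v => (k.choose u : ℚ)^2 * (((l:ℚ)-v) * (l.choose v : ℚ)^2))
  have h2 := w_conv N c
  have h3 : ∑ p ∈ antidiagonal N, ∑ q ∈ antidiagonal c,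
      (p.1.choose q.1 : ℚ)^2 * (((p.2:ℚ)-q.2) * (p.2.choose q.2 : ℚ)^2) +
      ∑ p ∈ antidiagonal N, ∑ q ∈ antidiagonal c,
      (p.2.choose q.2 : ℚ)^2 * (((p.1:ℚ)-q.1) * (p.1.choose q.1 : ℚ)^2) =
      ((N:ℚ)-c) * ∑ p ∈ antidiagonal N, ∑ q ∈ antidiagonal c,
        (p.1.choose q.1 : ℚ)^2 * (p.2.choose q.2 : ℚ)^2 := by
    simp only [← sum_add_distrib, mul_sum]
    apply sum_congr rfl; intro p hp
    apply sum_congr rfl; intro q hq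
    rw [HasAntidiagonal.mem_antidiagonal] at hq hp
    rw [← hq, ← hp]; push_cast; ring
  rw [h2] at h3
  linarith

lemma Sdiff_closed (a b : ℕ) : (Sdiff (a+1) b (a+1) b : ℚ) =
    ((a:ℚ)+1) * ((2*(a+b)+2).choose (2*(a+1)+1) : ℚ) / 4 +
      b * ((2*(a+b)+2).choose (2*a+1) : ℚ) / 4 := by
  have c1 := conv_v (a+b) (a+1)
  have c2 := conv_lv (a+b) a
  rw [Sdiff_eq, wT_sum]
  push_cast at c1 c2 ⊢
  rw [show (a:ℚ)+b-a = b by ring] at c2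
  rw [← c1, ← c2]
  rw [Finset.Nat.sum_antidiagonal_eq_sum_range_succ_mk, Finset.Nat.sum_antidiagonal_eq_sum_range_succ_mk,
    ← sum_add_distrib, show a+1+b = a+b+1 by ring]
  apply sum_congr rfl
  intro k hk
  rw [mem_range] at hk
  have a1 := anti_conv k (a+b-k) (a+1) (fun v => (v:ℚ))
  have a2 := anti_conv k (a+b-k) a (fun v => ((a+b-k : ℕ):ℚ) - v)
  simp only [Int.cast_natCast] at a1 a2
  simp only
  rw [← a1, ← a2, ← sum_add_distrib]
  unfold wZ
  rw [mul_sum]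
  apply sum_congr rfl
  intro u _
  obtain ⟨l, hl⟩ : ∃ l, a + b = k + l := ⟨a+b-k, by omega⟩
  rw [show a+b+1-k-1 = l by omega, show a+b-k = l by omega]
  have hq : (a:ℚ)+1+b-k = l+1 := by
    have : (a:ℚ)+b = k+l := by exact_mod_cast hl
    linarith
  rw [hq, show (a:ℤ)-u = ((a+1:ℕ):ℤ)-u-1 by push_cast; ring]
  have hr := cc_ratio l (((a+1:ℕ):ℤ)-u)
  generalize cc l (((a+1:ℕ):ℤ)-u) = x at *
  generalize cc l (((a+1:ℕ):ℤ)-u-1) = y at *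
  push_cast at hr ⊢
  linear_combination ((k.choose u : ℚ)^2) * (y - x) * hr

/-- The Wiener index of the minuscule lattice `Par(a×b)` (equation (4.2)):
`(4a+4b+2) · S⊖(a,b | a,b) = a·b·C(2a+2b+2, 2a+1)`. -/
theorem wiener_index_Par (a b : ℕ) :
    (4 * a + 4 * b + 2) * Sdiff a b a b = a * b * (2 * a + 2 * b + 2).choose (2 * a + 1) := by
  rcases a with _ | a
  · simp [Sdiff, Par_zero_left]
  have h := Sdiff_closed a b
  have e1 : ((2*(a+1)+2*b+2).choose (2*(a+1)+1) : ℚ) = (2*(a+b)+2).choose (2*a+1)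
      + 2 * (2*(a+b)+2).choose (2*a+1+1) + (2*(a+b)+2).choose (2*a+1+1+1) := by
    rw [show 2*(a+1)+2*b+2 = 2*(a+b)+2+1+1 by ring, show 2*(a+1)+1 = 2*a+1+1+1 by ring,
      Nat.choose_succ_succ' (2*(a+b)+2+1), Nat.choose_succ_succ' (2*(a+b)+2),
      Nat.choose_succ_succ' (2*(a+b)+2)]
    push_cast; ring
  have r1 := w_choose_rec (2*(a+b)+2) (2*a+1)
  have r2 := w_choose_rec (2*(a+b)+2) (2*a+1+1)
  have goal : (((4 * (a+1) + 4 * b + 2) * Sdiff (a+1) b (a+1) b : ℕ) : ℚ) =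
      (((a+1) * b * (2 * (a+1) + 2 * b + 2).choose (2 * (a+1) + 1) : ℕ) : ℚ) := by
    push_cast
    rw [h, e1, show 2*(a+1)+1 = 2*a+1+1+1 by ring]
    push_cast at r1 r2
    generalize ((2*(a+b)+2).choose (2*a+1) : ℚ) = x at *
    generalize ((2*(a+b)+2).choose (2*a+1+1) : ℚ) = y at *
    generalize ((2*(a+b)+2).choose (2*a+1+1+1) : ℚ) = z at *
    have h1 : (2*(a:ℚ)+1+1) ≠ 0 := by positivity
    have h2 : (2*(a:ℚ)+1+1+1) ≠ 0 := by positivity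
    have hy : y = (2*((a:ℚ)+b)+2-(2*a+1)) * x / (2*(a:ℚ)+1+1) := by field_simp; linarith
    have hz : z = (2*((a:ℚ)+b)+2-(2*a+1+1)) * y / (2*(a:ℚ)+1+1+1) := by field_simp; linarith
    rw [hz, hy]
    field_simp
    ring
  exact_mod_cast goal
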